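/- Let (V, c) be a finite-dimensional braided vector space that is left triangular with respect to the totally ordered basis X, and let r be an admissible endomorphism of V⊗V. Then for every word u in letters from X, the element [u]_r is homogeneous of degree l(u) in the tensor algebra, and its lexicographically smallest monomial is u with coefficient 1; that is, [u]_r − u lies in the span k{w : w a word with l(w) = l(u) and w > u lexicographically}. -/

import Mathlib

/-!
We identify the finite-dimensional vector space `V` with basis `X` with the free
`k`-module on `X`, and the tensor power `V^{⊗n}` with the free `k`-module on the
words of length `n` in letters from `X`; correspondingly `V^{⊗n} ⊗ V^{⊗m}` is the
free `k`-module on pairs of words.  A linear endomorphism `c` of `V ⊗ V` is encoded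
by its matrix `c : X → X → ((X × X) →₀ k)`, via `c(x ⊗ y) = Σ_{(z,w)} c x y (z,w) • z ⊗ w`.
-/

variable {k : Type*} [Field k] {X : Type*} [Fintype X] [LinearOrder X]

/-- The maps `c_{1,m} : V ⊗ V^{⊗m} → V^{⊗m} ⊗ V`, defined on basis vectors by
`c_{1,0} = id` and `c_{1,m+1} = (id_V ⊗ c_{1,m}) ∘ (c ⊗ id_{V^{⊗m}})`. -/
noncomputable def braidOne (c : X → X → ((X × X) →₀ k)) :
    X → List X → ((List X × List X) →₀ k)
  | x, [] => Finsupp.single ([], [x]) 1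
  | x, y :: v =>
      (c x y).sum fun p a =>
        a • Finsupp.mapDomain (fun q : List X × List X => (p.1 :: q.1, q.2))
          (braidOne c p.2 v)

/-- Auxiliary version of `c_{n,m}` where the first word is given reversed:
`c_{0,m} = id` and `c_{n+1,m} = (c_{n,m} ⊗ id_V) ∘ (id_{V^{⊗n}} ⊗ c_{1,m})`. -/
noncomputable def braidRev (c : X → X → ((X × X) →₀ k)) :
    List X → List X → ((List X × List X) →₀ k)
  | [], v => Finsupp.single (v, []) 1
  | x :: urev, v =>
      (braidOne c x v).sum fun p a =>
        a • Finsupp.mapDomain (fun q : List X × List X => (q.1, q.2 ++ p.2))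
          (braidRev c urev p.1)

/-- The braiding maps `c_{n,m} : V^{⊗n} ⊗ V^{⊗m} → V^{⊗m} ⊗ V^{⊗n}` on basis vectors:
`braidWords c u v` is `c_{l(u),l(v)}(u ⊗ v)`. -/
noncomputable def braidWords (c : X → X → ((X × X) →₀ k)) (u v : List X) :
    (List X × List X) →₀ k :=
  braidRev c u.reverse v

/-- `c` is left triangular with respect to the ordered basis `X`:
`c(x ⊗ y) = γ_{x,y} • y ⊗ x + Σ_{z > y} z ⊗ v_{x,y,z}`, i.e. the coefficient of
`c(x ⊗ y)` at `z ⊗ w` vanishes unless `(z, w) = (y, x)` or `z > y`. -/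
def LeftTriangularMat (c : X → X → ((X × X) →₀ k)) : Prop :=
  ∀ (x y : X) (zw : X × X), c x y zw ≠ 0 → (zw.1 = y ∧ zw.2 = x) ∨ y < zw.1

/-- `c ⊗ id` acting on `V ⊗ V ⊗ V` (matrix form). -/
noncomputable def act12 (c : X → X → ((X × X) →₀ k)) (f : (X × X × X) →₀ k) :
    (X × X × X) →₀ k :=
  f.sum fun t a => a • ((c t.1 t.2.1).sum fun p b => Finsupp.single (p.1, p.2, t.2.2) b)

/-- `id ⊗ c` acting on `V ⊗ V ⊗ V` (matrix form). -/
noncomputable def act23 (c : X → X → ((X × X) →₀ k)) (f : (X × X × X) →₀ k) :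
    (X × X × X) →₀ k :=
  f.sum fun t a => a • ((c t.2.1 t.2.2).sum fun p b => Finsupp.single (t.1, p.1, p.2) b)

/-- `c` satisfies the braid equation
`(c ⊗ id)(id ⊗ c)(c ⊗ id) = (id ⊗ c)(c ⊗ id)(id ⊗ c)`. -/
def SatisfiesBraidEq (c : X → X → ((X × X) →₀ k)) : Prop :=
  ∀ f : (X × X × X) →₀ k,
    act12 c (act23 c (act12 c f)) = act23 c (act12 c (act23 c f))

/-- The linear extension of `c` to an endomorphism of `V ⊗ V`. -/
noncomputable def extendMat (c : X → X → ((X × X) →₀ k)) (f : (X × X) →₀ k) :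
    (X × X) →₀ k :=
  f.sum fun p a => a • c p.1 p.2

/-- The coefficient `γ_{u,v} = Π_{x ∈ u} Π_{y ∈ v} γ x y`. -/
def gammaWords (γ : X → X → k) (u v : List X) : k :=
  (u.map fun x => (v.map fun y => γ x y).prod).prod

/-- A word `u` is a Lyndon word if it is nonempty and lexicographically smaller than
each of its proper nonempty suffixes. -/
def IsLyndon {X : Type*} [LinearOrder X] (u : List X) : Prop :=
  u ≠ [] ∧ ∀ v w : List X, v ≠ [] → w ≠ [] → u = v ++ w → List.Lex (· < ·) u w

/-- `ls` is a Lyndon factorization of `u`: all factors are Lyndon words, the factors are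
(lexicographically) nonincreasing, and their concatenation is `u`. -/
def IsLyndonFactorization {X : Type*} [LinearOrder X] (ls : List (List X)) (u : List X) : Prop :=
  (∀ l ∈ ls, IsLyndon l) ∧ ls.Chain' (fun a b => ¬ List.Lex (· < ·) a b) ∧ ls.flatten = u

/-- `u = v ++ w` is the Shirshov decomposition of the Lyndon word `u`:
`w` is the longest proper nonempty suffix of `u` that is a Lyndon word. -/
def ShirshovSplit {X : Type*} [LinearOrder X] (u v w : List X) : Prop :=
  v ≠ [] ∧ w ≠ [] ∧ u = v ++ w ∧ IsLyndon w ∧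
    ∀ w' : List X, w' ≠ [] → IsLyndon w' →
      (∃ v' : List X, v' ≠ [] ∧ u = v' ++ w') → w'.length ≤ w.length

/-- The multiplication `V^{⊗n} ⊗ V^{⊗m} → V^{⊗(n+m)}` of the tensor algebra,
in the word model: concatenation of the two components. -/
noncomputable def mulWords {k : Type*} [Field k] {X : Type*} :
    ((List X × List X) →₀ k) → ((List X) →₀ k) :=
  Finsupp.mapDomain fun p : List X × List X => p.1 ++ p.2

/-- The tensor product of two elements of the tensor algebra, in the word model. -/
noncomputable def tensWords {k : Type*} [Field k] {X : Type*}
    (f g : (List X) →₀ k) : (List X × List X) →₀ k :=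
  f.sum fun u a => g.sum fun v b => Finsupp.single (u, v) (a * b)

/-- The linear extension of the braiding maps `c_{n,m}` to all of `T(V) ⊗ T(V)`
(applied degreewise), in the word model. -/
noncomputable def braidExt {k : Type*} [Field k] {X : Type*} [Fintype X] [LinearOrder X]
    (c : X → X → ((X × X) →₀ k)) (f : (List X × List X) →₀ k) :
    (List X × List X) →₀ k :=
  f.sum fun p a => a • braidWords c p.1 p.2

/-- `br` is the iterated-commutator map `u ↦ [u]_r` associated to the endomorphism `r`:
it satisfies the defining recursion of `[-]_r`. -/
def IsBracketing {k : Type*} [Field k] {X : Type*} [Fintype X] [LinearOrder X]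
    (r : X → X → ((X × X) →₀ k)) (br : List X → ((List X) →₀ k)) : Prop :=
  br [] = Finsupp.single [] 1 ∧
  (∀ x : X, br [x] = Finsupp.single [x] 1) ∧
  (∀ u v w : List X, IsLyndon u → ShirshovSplit u v w →
    br u = mulWords (tensWords (br v) (br w))
      - mulWords (braidExt r (tensWords (br v) (br w)))) ∧
  (∀ (l : List X) (ls : List (List X)) (u : List X), ls ≠ [] →
    IsLyndonFactorization (l :: ls) u →
    br u = mulWords (tensWords (br l) (br ls.flatten)))

/-!
By left triangularity, carrying letters past a word `w` turns `w` only into words `w' ≥ w` of the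
same length, so every term of `r_{l(v),l(w)}(v ⊗ w)` has the form `w' ⊗ v'` with `w' ≥ w`.
If `vw` is a Lyndon word then `vw < w ≤ w'`, and since `w'` is not longer than `vw` this gives
`vw < w'v'`: the braided half of the commutator `[v]_r [w]_r - μ r([v]_r ⊗ [w]_r)` consists of words
larger than `vw`, and the smallest word `vw` of the product survives with coefficient `1`.
Concatenation is strictly monotone on words of fixed lengths, which settles the products over a
Lyndon decomposition; since Shirshov and Lyndon decompositions exist, this reaches every word.
-/

section Words

variable {α : Type*} [LinearOrder α]

theorem append_lt_append_of_lt_of_not_isPrefix {a b : List α} (h : a < b) (hp : ¬ a <+: b)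
    (s t : List α) : a ++ s < b ++ t := by
  induction h with
  | nil => exact absurd List.nil_prefix hp
  | rel hxy => exact .rel hxy
  | cons _ ih => exact .cons (ih fun hab => hp (List.cons_prefix_cons.2 ⟨rfl, hab⟩))

theorem append_lt_append_of_lt_of_length_le {a b : List α} (h : a < b)
    (hl : b.length ≤ a.length) (s t : List α) : a ++ s < b ++ t :=
  append_lt_append_of_lt_of_not_isPrefix h (fun hp => h.ne (hp.eq_of_length_le hl)) s t

theorem isLyndon_singleton (x : α) : IsLyndon [x] := by
  refine ⟨List.cons_ne_nil x [], fun v w hv hw e => ?_⟩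
  rcases List.append_eq_singleton_iff.1 e.symm with ⟨hv', -⟩ | ⟨-, hw'⟩
  · exact absurd hv' hv
  · exact absurd hw' hw

theorem IsLyndon.append_lt_right {l m : List α} (hm : IsLyndon m) (hl : l ≠ []) (h : l < m) :
    l ++ m < m := by
  by_cases hp : l <+: m
  · obtain ⟨s, rfl⟩ := hp
    have hs : s ≠ [] := by
      rintro rfl
      simp at h
    exact List.append_left_lt (hm.2 l s hl hs rfl)
  · simpa using append_lt_append_of_lt_of_not_isPrefix h hp m []

theorem IsLyndon.append {l m : List α} (hl : IsLyndon l) (hm : IsLyndon m) (h : l < m) :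
    IsLyndon (l ++ m) := by
  have hlm : l ++ m < m := hm.append_lt_right hl.1 h
  refine ⟨List.append_ne_nil_of_left_ne_nil hl.1 m, fun v w hv hw e => ?_⟩
  rcases List.append_eq_append_iff.1 e with ⟨s, rfl, rfl⟩ | ⟨s, rfl, rfl⟩
  · rcases eq_or_ne s [] with rfl | hs
    · exact hlm
    · exact lt_trans hlm (hm.2 s w hs hw rfl)
  · rcases eq_or_ne s [] with rfl | hs
    · exact hlm
    · exact append_lt_append_of_lt_of_length_le (hl.2 v s hv hs rfl) (by simp) m m

theorem IsLyndonFactorization.exists_append_left {ls : List (List α)} {l u : List α}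
    (hls : IsLyndonFactorization ls u) (hl : IsLyndon l) :
    ∃ ms, IsLyndonFactorization ms (l ++ u) := by
  induction ls generalizing l u with
  | nil =>
    obtain ⟨-, -, rfl⟩ := hls
    exact ⟨[l], by simpa using hl, List.isChain_singleton l, by simp⟩
  | cons m ls ih =>
    obtain ⟨hlyn, hchain, rfl⟩ := hls
    rw [List.forall_mem_cons] at hlyn
    -- As long as `l` is smaller than the first factor, the two merge into a longer Lyndon word.
    by_cases h : l < m
    · obtain ⟨ms, hms⟩ := ih ⟨hlyn.2, hchain.tail, rfl⟩ (hl.append hlyn.1 h)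
      exact ⟨ms, by simpa using hms⟩
    · exact ⟨l :: m :: ls, by simpa using ⟨hl, hlyn⟩, List.isChain_cons_cons.2 ⟨h, hchain⟩, rfl⟩

theorem exists_isLyndonFactorization (u : List α) : ∃ ls, IsLyndonFactorization ls u := by
  induction u with
  | nil => exact ⟨[], List.forall_mem_nil _, List.isChain_nil, rfl⟩
  | cons x u ih =>
    obtain ⟨ls, hls⟩ := ih
    exact hls.exists_append_left (isLyndon_singleton x)

theorem exists_shirshovSplit {u : List α} (hu : 2 ≤ u.length) :
    ∃ v w, ShirshovSplit u v w := by
  let S : Set (List α) := {w | IsLyndon w ∧ ∃ v, v ≠ [] ∧ u = v ++ w}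
  have hfin : S.Finite := u.tails.finite_toSet.subset fun w ⟨_, v, _, e⟩ =>
    (List.mem_tails w u).2 ⟨v, e.symm⟩
  have hne : S.Nonempty := by
    have hu₀ : u ≠ [] := List.length_pos_iff.1 (by omega)
    refine ⟨[u.getLast hu₀], isLyndon_singleton _, u.dropLast, ?_,
      (List.dropLast_append_getLast hu₀).symm⟩
    rw [← List.length_pos_iff, List.length_dropLast]
    omega
  obtain ⟨w, ⟨hw, v, hv, e⟩, hmax⟩ := Set.exists_max_image S List.length hfin hne
  exact ⟨v, w, hv, hw.1, e, hw, fun w' _ hw' hsuffix => hmax w' ⟨hw', hsuffix⟩⟩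

/-- The cases are those of the recursion defining `[-]_r`. -/
theorem lyndon_shirshov_induction {P : List α → Prop} (nil : P []) (singleton : ∀ x, P [x])
    (shirshov : ∀ u v w, IsLyndon u → ShirshovSplit u v w → P v → P w → P u)
    (factorization : ∀ l ls u, ls ≠ [] → IsLyndonFactorization (l :: ls) u →
      P l → P ls.flatten → P u) (u : List α) : P u := by
  induction hn : u.length using Nat.strong_induction_on generalizing u with
  | _ n ih =>
  subst hn
  obtain ⟨ls, hls⟩ := exists_isLyndonFactorization u
  have hlyn := hls.1
  have hflat := hls.2.2
  match ls with
  | [] => exact hflat ▸ nil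
  | [l] =>
    obtain rfl : l = u := by simpa using hflat
    have hl : IsLyndon l := hlyn l List.mem_cons_self
    have hl₀ := List.length_pos_iff.2 hl.1
    by_cases hlen : l.length = 1
    · obtain ⟨x, rfl⟩ := List.length_eq_one_iff.1 hlen
      exact singleton x
    · obtain ⟨v, w, hs⟩ := exists_shirshovSplit (u := l) (by omega)
      have hv := List.length_pos_iff.2 hs.1
      have hw := List.length_pos_iff.2 hs.2.1
      have hvw : l.length = v.length + w.length := by rw [hs.2.2.1, List.length_append]
      exact shirshov l v w hl hs (ih _ (by omega) v rfl) (ih _ (by omega) w rfl)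
  | l :: m :: ls =>
    have hl := List.length_pos_iff.2 (hlyn l (by simp)).1
    have hm := List.length_pos_iff.2 (hlyn m (by simp)).1
    have hlen : u.length = l.length + (m :: ls).flatten.length := by
      rw [← hflat, List.flatten_cons, List.length_append]
    have hlen' : (m :: ls).flatten.length = m.length + ls.flatten.length := by
      rw [List.flatten_cons, List.length_append]
    exact factorization l (m :: ls) u (List.cons_ne_nil m ls) hls
      (ih _ (by omega) l rfl) (ih _ (by omega) (m :: ls).flatten rfl)

/-- Words of the same length as `u` that are lexicographically larger than `u`. -/
def wordsGT (u : List α) : Set (List α) :=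
  {w | w.length = u.length ∧ u < w}

/-- Words of the same length as `u` that are lexicographically larger than or equal to `u`. -/
def wordsGE (u : List α) : Set (List α) :=
  {w | w.length = u.length ∧ u ≤ w}

theorem self_mem_wordsGE (u : List α) : u ∈ wordsGE u :=
  ⟨rfl, le_rfl⟩

theorem wordsGT_subset_wordsGE (u : List α) : wordsGT u ⊆ wordsGE u :=
  fun _ hw => ⟨hw.1, hw.2.le⟩

theorem wordsGE_subset_wordsGE {u v : List α} (hv : v ∈ wordsGE u) : wordsGE v ⊆ wordsGE u :=
  fun _ hw => ⟨hw.1.trans hv.1, hv.2.trans hw.2⟩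

theorem append_mem_wordsGT_of_left {u v u' v' : List α} (hu : u' ∈ wordsGT u)
    (hv : v'.length = v.length) : u' ++ v' ∈ wordsGT (u ++ v) :=
  ⟨by simp [hu.1, hv], append_lt_append_of_lt_of_length_le hu.2 hu.1.le v v'⟩

theorem append_mem_wordsGT_of_right (u : List α) {v v' : List α} (hv : v' ∈ wordsGT v) :
    u ++ v' ∈ wordsGT (u ++ v) :=
  ⟨by simp [hv.1], List.append_left_lt hv.2⟩

theorem cons_mem_wordsGE {x y : α} {v v' : List α} (hxy : x ≤ y) (hv : v' ∈ wordsGE v) :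
    y :: v' ∈ wordsGE (x :: v) := by
  refine ⟨by simp [hv.1], ?_⟩
  rcases hxy.lt_or_eq with h | rfl
  · exact le_of_lt (.rel h)
  · exact List.cons_le_cons x hv.2

theorem append_mem_wordsGT_append_swap {v w v' w' : List α} (h : v ++ w < w)
    (hw : w' ∈ wordsGE w) (hv : v'.length = v.length) : w' ++ v' ∈ wordsGT (v ++ w) := by
  refine ⟨by simp [hw.1, hv, add_comm], ?_⟩
  simpa using append_lt_append_of_lt_of_length_le (h.trans_le hw.2) (by simp [hw.1]) [] v'

end Words

section WordModel

variable {α : Type*}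

theorem mapDomain_mem_supported {R M β : Type*} [Semiring R] [AddCommMonoid M] [Module R M]
    {s : Set α} {t : Set β} {f : α →₀ M} {g : α → β} (hf : f ∈ Finsupp.supported M R s)
    (hg : Set.MapsTo g s t) : f.mapDomain g ∈ Finsupp.supported M R t :=
  Finsupp.supported_comap_lmapDomain M R g t (Finsupp.supported_mono hg hf)

theorem finsuppSum_smul_mem {R M : Type*} [Semiring R] [AddCommMonoid M] [Module R M]
    (N : Submodule R M) {f : α →₀ R} {g : α → M} (h : ∀ a ∈ f.support, g a ∈ N) :
    (f.sum fun a b => b • g a) ∈ N :=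
  N.sum_mem fun a ha => N.smul_mem _ (h a ha)

theorem tensWords_mem_supported {s t : Set (List α)} {f g : List α →₀ k}
    (hf : f ∈ Finsupp.supported k k s) (hg : g ∈ Finsupp.supported k k t) :
    tensWords f g ∈ Finsupp.supported k k (s ×ˢ t) :=
  Submodule.sum_mem _ fun _ hu => Submodule.sum_mem _ fun _ hv =>
    Finsupp.single_mem_supported k _ ⟨hf hu, hg hv⟩

theorem tensWords_sub_left (f f' g : List α →₀ k) :
    tensWords (f - f') g = tensWords f g - tensWords f' g :=
  Finsupp.sum_sub_index fun u a b => by simp [sub_mul]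

theorem tensWords_sub_right (f g g' : List α →₀ k) :
    tensWords f (g - g') = tensWords f g - tensWords f g' := by
  simp only [tensWords, ← Finsupp.sum_sub]
  exact Finsupp.sum_congr fun u _ => Finsupp.sum_sub_index fun v a b => by simp [mul_sub]

theorem mulWords_sub (f g : (List α × List α) →₀ k) :
    mulWords (f - g) = mulWords f - mulWords g :=
  map_sub (Finsupp.lmapDomain k k fun p : List α × List α => p.1 ++ p.2) f g

theorem mulWords_tensWords_single (u v : List α) :
    mulWords (tensWords (Finsupp.single u (1 : k)) (Finsupp.single v 1)) =
      Finsupp.single (u ++ v) 1 := by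
  rw [tensWords, Finsupp.sum_single_index (by simp), Finsupp.sum_single_index (by simp), mul_one,
    mulWords, Finsupp.mapDomain_single]

end WordModel

section SmallestMonomial

variable {α : Type*} [LinearOrder α] {u v : List α} {f g : List α →₀ k}

/-- `f` is homogeneous of degree `l(u)` and its lexicographically smallest monomial is `u`, with
coefficient `1`. -/
def HasSmallestMonomial (f : List α →₀ k) (u : List α) : Prop :=
  f - Finsupp.single u 1 ∈ Finsupp.supported k k (wordsGT u)

theorem hasSmallestMonomial_single (u : List α) :
    HasSmallestMonomial (Finsupp.single u (1 : k)) u := by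
  simp [HasSmallestMonomial]

theorem HasSmallestMonomial.mem_supported_wordsGE (hf : HasSmallestMonomial f u) :
    f ∈ Finsupp.supported k k (wordsGE u) := by
  rw [← sub_add_cancel f (Finsupp.single u 1)]
  exact add_mem (Finsupp.supported_mono (wordsGT_subset_wordsGE u) hf)
    (Finsupp.single_mem_supported k 1 (self_mem_wordsGE u))

theorem HasSmallestMonomial.sub (hf : HasSmallestMonomial f u)
    (hg : g ∈ Finsupp.supported k k (wordsGT u)) : HasSmallestMonomial (f - g) u := by
  rw [HasSmallestMonomial, sub_right_comm]
  exact sub_mem hf hg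

theorem HasSmallestMonomial.mulWords_tensWords (hf : HasSmallestMonomial f u)
    (hg : HasSmallestMonomial g v) : HasSmallestMonomial (mulWords (tensWords f g)) (u ++ v) := by
  have htelescope : mulWords (tensWords f g) - Finsupp.single (u ++ v) 1 =
      mulWords (tensWords (f - Finsupp.single u 1) g) +
        mulWords (tensWords (Finsupp.single u 1) (g - Finsupp.single v 1)) := by
    rw [tensWords_sub_left, tensWords_sub_right, mulWords_sub, mulWords_sub,
      mulWords_tensWords_single, sub_add_sub_cancel]
  have hleft : mulWords (tensWords (f - Finsupp.single u 1) g) ∈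
      Finsupp.supported k k (wordsGT (u ++ v)) :=
    mapDomain_mem_supported (tensWords_mem_supported hf hg.mem_supported_wordsGE)
      fun _ hp => append_mem_wordsGT_of_left hp.1 hp.2.1
  have hright : mulWords (tensWords (Finsupp.single u 1) (g - Finsupp.single v 1)) ∈
      Finsupp.supported k k (wordsGT (u ++ v)) := by
    refine mapDomain_mem_supported (tensWords_mem_supported
      (Finsupp.single_mem_supported k 1 (Set.mem_singleton u)) hg) ?_
    rintro ⟨_, v'⟩ ⟨rfl, hv'⟩
    exact append_mem_wordsGT_of_right _ hv'
  rw [HasSmallestMonomial, htelescope]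
  exact add_mem hleft hright

end SmallestMonomial

section Braiding

variable {α : Type*} [LinearOrder α] {r : α → α → ((α × α) →₀ k)}

theorem LeftTriangularMat.braidOne_mem_supported (hr : LeftTriangularMat r) (x : α) (v : List α) :
    braidOne r x v ∈ Finsupp.supported k k (wordsGE v ×ˢ {u | u.length = 1}) := by
  induction v generalizing x with
  | nil => exact Finsupp.single_mem_supported k 1 ⟨self_mem_wordsGE [], rfl⟩
  | cons y v ih =>
    refine finsuppSum_smul_mem _ fun p hp => mapDomain_mem_supported (ih p.2) fun q hq => ?_
    have hy : y ≤ p.1 := (hr x y p (Finsupp.mem_support_iff.1 hp)).elim (·.1.ge) le_of_lt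
    exact ⟨cons_mem_wordsGE hy hq.1, hq.2⟩

theorem LeftTriangularMat.braidRev_mem_supported (hr : LeftTriangularMat r) (u v : List α) :
    braidRev r u v ∈ Finsupp.supported k k (wordsGE v ×ˢ {u' | u'.length = u.length}) := by
  induction u generalizing v with
  | nil => exact Finsupp.single_mem_supported k 1 ⟨self_mem_wordsGE v, rfl⟩
  | cons x u ih =>
    refine finsuppSum_smul_mem _ fun p hp => mapDomain_mem_supported (ih p.1) fun q hq => ?_
    obtain ⟨hp₁, hp₂ : p.2.length = 1⟩ := hr.braidOne_mem_supported x v hp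
    obtain ⟨hq₁, hq₂ : q.2.length = u.length⟩ := hq
    exact ⟨wordsGE_subset_wordsGE hp₁ hq₁, by simp [hp₂, hq₂]⟩

variable [Fintype α]

theorem LeftTriangularMat.braidExt_mem_supported (hr : LeftTriangularMat r) {n : ℕ} {w : List α}
    {f : (List α × List α) →₀ k}
    (hf : f ∈ Finsupp.supported k k ({v | v.length = n} ×ˢ wordsGE w)) :
    braidExt r f ∈ Finsupp.supported k k (wordsGE w ×ˢ {v | v.length = n}) := by
  refine finsuppSum_smul_mem _ fun p hp =>
    Finsupp.supported_mono ?_ (hr.braidRev_mem_supported p.1.reverse p.2)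
  obtain ⟨hp₁ : p.1.length = n, hp₂⟩ := hf hp
  exact Set.prod_mono (wordsGE_subset_wordsGE hp₂) (by simp [hp₁])

theorem LeftTriangularMat.mulWords_braidExt_mem_supported (hr : LeftTriangularMat r)
    {v w : List α} (hvw : v ++ w < w) {f : (List α × List α) →₀ k}
    (hf : f ∈ Finsupp.supported k k ({v' | v'.length = v.length} ×ˢ wordsGE w)) :
    mulWords (braidExt r f) ∈ Finsupp.supported k k (wordsGT (v ++ w)) :=
  mapDomain_mem_supported (hr.braidExt_mem_supported hf)
    fun _ hq => append_mem_wordsGT_append_swap hvw hq.1 hq.2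

theorem HasSmallestMonomial.commutator (hr : LeftTriangularMat r) {v w : List α}
    (hvw : v ++ w < w) {f g : List α →₀ k} (hf : HasSmallestMonomial f v)
    (hg : HasSmallestMonomial g w) :
    HasSmallestMonomial (mulWords (tensWords f g) - mulWords (braidExt r (tensWords f g)))
      (v ++ w) := by
  have hdeg : f ∈ Finsupp.supported k k {v' | v'.length = v.length} :=
    Finsupp.supported_mono (fun _ h => h.1) hf.mem_supported_wordsGE
  exact (hf.mulWords_tensWords hg).sub <|
    hr.mulWords_braidExt_mem_supported hvw (tensWords_mem_supported hdeg hg.mem_supported_wordsGE)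

theorem IsBracketing.hasSmallestMonomial (hr : LeftTriangularMat r)
    {br : List α → List α →₀ k} (hbr : IsBracketing r br) (u : List α) :
    HasSmallestMonomial (br u) u := by
  obtain ⟨hnil, hsingleton, hshirshov, hfactorization⟩ := hbr
  induction u using lyndon_shirshov_induction with
  | nil => exact hnil ▸ hasSmallestMonomial_single []
  | singleton x => exact hsingleton x ▸ hasSmallestMonomial_single [x]
  | shirshov u v w hu hs ihv ihw =>
    rw [hshirshov u v w hu hs]
    obtain ⟨hv, hw, rfl, -, -⟩ := hs
    exact ihv.commutator hr (hu.2 v w hv hw rfl) ihw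
  | factorization l ls u hls hu ihl ihls =>
    rw [hfactorization l ls u hls hu]
    obtain ⟨-, -, rfl⟩ := hu
    exact ihl.mulWords_tensWords ihls

end Braiding

theorem bracket_smallest_monomial_general
    (r : X → X → ((X × X) →₀ k)) (hrtri : LeftTriangularMat r)
    (br : List X → ((List X) →₀ k)) (hbr : IsBracketing r br) (u : List X) :
    br u - Finsupp.single u 1 ∈
      Submodule.span k {f : (List X) →₀ k |
        ∃ w : List X, w.length = u.length ∧ List.Lex (· < ·) u w ∧
          f = Finsupp.single w 1} := by
  have h : br u - Finsupp.single u 1 ∈ Finsupp.supported k k (wordsGT u) :=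
    hbr.hasSmallestMonomial hrtri u
  rw [Finsupp.supported_eq_span_single] at h
  refine Submodule.span_mono ?_ h
  rintro _ ⟨w, ⟨hlen, hlt⟩, rfl⟩
  exact ⟨w, hlen, hlt, rfl⟩

/-- Let `(V, c)` be a finite-dimensional braided vector space, left triangular with
respect to `X`, and let `r` be an admissible endomorphism of `V ⊗ V`.  Then for every
word `u`, the element `[u]_r` is homogeneous of degree `l(u)` with lexicographically
smallest monomial `u`, with coefficient `1`:
`[u]_r ∈ u + k X^{l(u)}_{> u}`. -/
theorem bracket_smallest_monomial
    (c : X → X → ((X × X) →₀ k))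
    (hcbij : Function.Bijective (extendMat c))
    (hcbraid : SatisfiesBraidEq c)
    (hctri : LeftTriangularMat c)
    (r : X → X → ((X × X) →₀ k))
    (hrbraid : SatisfiesBraidEq r)
    (hrtri : LeftTriangularMat r)
    (br : List X → ((List X) →₀ k)) (hbr : IsBracketing r br)
    (u : List X) :
    br u - Finsupp.single u 1 ∈
      Submodule.span k {f : (List X) →₀ k |
        ∃ w : List X, w.length = u.length ∧ List.Lex (· < ·) u w ∧
          f = Finsupp.single w 1} :=
  bracket_smallest_monomial_general r hrtri br hbr u
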